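/- Let ρ₀ be a pure state on n qubits and let Φ be any quantum circuit consisting of L layers, where each layer is a unitary channel followed by n-qubit tensor-product depolarizing noise N_p^{⊗n} with parameter p ∈ (0,1]. Then the von Neumann entropy of the output satisfies S(Φ(ρ₀)) ≥ (1 − (1−p)^L)·n·log 2. -/

import Mathlib

open Matrix
open scoped ComplexOrder

/-- von Neumann entropy of a (Hermitian) matrix, via its eigenvalues. -/
noncomputable def vnEntropy {ι : Type*} [Fintype ι] [DecidableEq ι]
    (M : Matrix ι ι ℂ) : ℝ :=
  if h : M.IsHermitian then -∑ i, h.eigenvalues i * Real.log (h.eigenvalues i) else 0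

/-- Full depolarization of the qubits in `S ⊆ Fin n`, identity elsewhere. -/
noncomputable def depolSet {n : ℕ} (S : Finset (Fin n))
    (ρ : Matrix (Fin n → Fin 2) (Fin n → Fin 2) ℂ) :
    Matrix (Fin n → Fin 2) (Fin n → Fin 2) ℂ :=
  Matrix.of fun x y =>
    if ∀ i ∈ S, x i = y i then
      ((2 : ℂ) ^ S.card)⁻¹ * (((2 : ℂ) ^ (n - S.card))⁻¹ *
        ∑ z : Fin n → Fin 2, ρ (S.piecewise z x) (S.piecewise z y))
    else 0

/-- The tensor-product depolarizing channel `N_p^{⊗n}`. -/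
noncomputable def depolAll {n : ℕ} (p : ℝ)
    (ρ : Matrix (Fin n → Fin 2) (Fin n → Fin 2) ℂ) :
    Matrix (Fin n → Fin 2) (Fin n → Fin 2) ℂ :=
  ∑ S : Finset (Fin n), (((p : ℂ)) ^ S.card * ((1 - p : ℝ) : ℂ) ^ (n - S.card)) • depolSet S ρ

/-- The noisy circuit: `L` layers, each a unitary conjugation followed by `N_p^{⊗n}`. -/
noncomputable def noisyCircuit {n : ℕ} (p : ℝ)
    (U : ℕ → Matrix (Fin n → Fin 2) (Fin n → Fin 2) ℂ) :
    ℕ → Matrix (Fin n → Fin 2) (Fin n → Fin 2) ℂ → Matrix (Fin n → Fin 2) (Fin n → Fin 2) ℂ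
  | 0, ρ => ρ
  | (L + 1), ρ => depolAll p (U L * noisyCircuit p U L ρ * (U L)ᴴ)

/-!
One layer of noise sends `ρ` to the mixture `∑ S, p ^ |S| (1 - p) ^ (n - |S|) • D_S ρ`, where `D_S`
depolarizes the qubits in `S` completely. By concavity, the entropy of the mixture is at least the
average of `f S = S(D_S ρ)` over the random set `S`. Strong subadditivity says that `f` is
submodular, so the average is at least
`(1 - p) f ∅ + p f [n] = (1 - p) S(ρ) + p n log 2`; iterating this over the layers gives the bound.

Concavity and strong subadditivity both come from joint convexity of the relative entropy, the
second because `D_S` is an average of conjugations by Weyl operators and `Tr A log (D_S B)` depends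
on `A` only through `D_S A`. Joint convexity is obtained by interpolating between left
multiplication `L_B` and right multiplication `R_A`: the derivative in `s` of
`⟪1, A log ((1 - s) L_B + s R_A)⟫` is, up to terms that cancel, a positive multiple of
`⟪A, ((1 - s) L_B + s R_A)⁻¹ A⟫`, and the latter is jointly convex in `(A, B)` as a maximum of forms
that are linear in `(A, B)`.
-/

/-! ### Joint convexity of the relative entropy -/

theorem two_mul_re_conj_mul_sub_eq (y o : ℂ) {a m : ℝ} (h : m = 0 → a = 0) :
    2 * a * (star y * o).re - m * ‖y‖ ^ 2 =
      ‖o‖ ^ 2 * a * a / m - m * ‖y - (a / m : ℝ) * o‖ ^ 2 := by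
  by_cases hm : m = 0
  · simp [hm, h hm]
  · simp only [Complex.sq_norm, Complex.normSq_apply, Complex.star_def, Complex.mul_re,
      Complex.conj_re, Complex.conj_im, Complex.sub_re, Complex.sub_im, Complex.mul_im,
      Complex.ofReal_re, Complex.ofReal_im]
    field_simp
    ring

theorem sum_smul_le_sum_abs_smul {E κ : Type*} [AddCommGroup E] [PartialOrder E]
    [IsOrderedAddMonoid E] [Module ℝ E] [PosSMulMono ℝ E] [SMulPosMono ℝ E] {K : Finset κ}
    {c w : κ → ℝ} {x y : κ → E} (hw : ∀ k ∈ K, 0 ≤ w k) (hy : ∀ k ∈ K, 0 ≤ y k)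
    (hxy : ∀ k ∈ K, x k ≤ c k • y k) :
    ∑ k ∈ K, w k • x k ≤ (∑ k ∈ K, |c k|) • ∑ k ∈ K, w k • y k := by
  rw [Finset.smul_sum]
  refine Finset.sum_le_sum fun k hk => ?_
  rw [smul_comm]
  exact smul_le_smul_of_nonneg_left ((hxy k hk).trans (smul_le_smul_of_nonneg_right
    ((le_abs_self _).trans (Finset.single_le_sum (fun k _ => abs_nonneg (c k)) hk)) (hy k hk)))
    (hw k hk)

theorem posSemidef_sum_smul {ι κ : Type*} {K : Finset κ} {w : κ → ℝ} (hw : ∀ k ∈ K, 0 ≤ w k)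
    {A : κ → Matrix ι ι ℂ} (hA : ∀ k ∈ K, (A k).PosSemidef) :
    (∑ k ∈ K, w k • A k).PosSemidef :=
  posSemidef_sum K fun k hk => (hA k hk).smul (hw k hk)

section Spectral

variable {ι : Type*} [Fintype ι] [DecidableEq ι] {A B : Matrix ι ι ℂ}

theorem cfc_eq_eigenvectorUnitary_mul_diagonal_mul (hA : A.IsHermitian) (f : ℝ → ℝ) :
    cfc f A = (hA.eigenvectorUnitary : Matrix ι ι ℂ) *
      diagonal (fun i => (f (hA.eigenvalues i) : ℂ)) *
        (hA.eigenvectorUnitary : Matrix ι ι ℂ)ᴴ := by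
  rw [hA.cfc_eq]
  rfl

theorem trace_conjTranspose_mul_diagonal_mul_mul_diagonal (X Y : Matrix ι ι ℂ) (a b : ι → ℂ) :
    (Xᴴ * diagonal b * Y * diagonal a).trace = ∑ j, ∑ i, b j * a i * (star (X j i) * Y j i) := by
  simp only [Matrix.trace, diag_apply, mul_diagonal, mul_apply (M := _ * _) (N := Y),
    conjTranspose_apply, Finset.sum_mul]
  rw [Finset.sum_comm]
  refine Finset.sum_congr rfl fun j _ => Finset.sum_congr rfl fun i _ => ?_
  ring

theorem trace_cfc (hA : A.IsHermitian) (f : ℝ → ℝ) :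
    (cfc f A).trace = ((∑ i, f (hA.eigenvalues i) : ℝ) : ℂ) := by
  rw [cfc_eq_eigenvectorUnitary_mul_diagonal_mul hA, Matrix.trace_mul_cycle,
    show (hA.eigenvectorUnitary : Matrix ι ι ℂ)ᴴ * (hA.eigenvectorUnitary : Matrix ι ι ℂ) = 1 from
      Unitary.coe_star_mul_self _, Matrix.one_mul, trace_diagonal, Complex.ofReal_sum]

theorem mul_cfc (hA : A.IsHermitian) (f : ℝ → ℝ) : A * cfc f A = cfc (fun x => x * f x) A := by
  rw [cfc_mul _ _ A (finite_real_spectrum.continuousOn _) (finite_real_spectrum.continuousOn _),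
    cfc_id' ℝ A]

/-- The matrix of `X` as a map from an eigenbasis of `A` to an eigenbasis of `B`; left
multiplication by `B` and right multiplication by `A` act on its entries by scalars. -/
noncomputable def eigencoord (hA : A.IsHermitian) (hB : B.IsHermitian) (X : Matrix ι ι ℂ) :
    Matrix ι ι ℂ :=
  (hB.eigenvectorUnitary : Matrix ι ι ℂ)ᴴ * X * (hA.eigenvectorUnitary : Matrix ι ι ℂ)

theorem eigencoord_surjective (hA : A.IsHermitian) (hB : B.IsHermitian) :
    Function.Surjective (eigencoord hA hB) := fun Y => by
  refine ⟨(hB.eigenvectorUnitary : Matrix ι ι ℂ) * Y *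
    (hA.eigenvectorUnitary : Matrix ι ι ℂ)ᴴ, ?_⟩
  simp only [eigencoord, ← star_eq_conjTranspose, ← Matrix.mul_assoc, Unitary.coe_star_mul_self,
    Matrix.one_mul]
  rw [Matrix.mul_assoc, Unitary.coe_star_mul_self, Matrix.mul_one]

theorem trace_conjTranspose_mul_cfc_mul_mul_cfc (hA : A.IsHermitian) (hB : B.IsHermitian)
    (f g : ℝ → ℝ) (X Y : Matrix ι ι ℂ) :
    (Xᴴ * cfc g B * Y * cfc f A).trace = ∑ j, ∑ i,
      (g (hB.eigenvalues j) : ℂ) * f (hA.eigenvalues i) *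
        (star (eigencoord hA hB X j i) * eigencoord hA hB Y j i) := by
  rw [← trace_conjTranspose_mul_diagonal_mul_mul_diagonal,
    cfc_eq_eigenvectorUnitary_mul_diagonal_mul hA, cfc_eq_eigenvectorUnitary_mul_diagonal_mul hB,
    ← Matrix.mul_assoc, Matrix.trace_mul_comm]
  simp only [eigencoord, conjTranspose_mul, conjTranspose_conjTranspose, Matrix.mul_assoc]

/-- The transition weights `|⟨vⱼ, uᵢ⟩|²` between eigenbases `u` of `A` and `v` of `B`. -/
noncomputable def overlap (hA : A.IsHermitian) (hB : B.IsHermitian) (j i : ι) : ℝ :=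
  ‖eigencoord hA hB 1 j i‖ ^ 2

theorem trace_cfc_mul_cfc_re (hA : A.IsHermitian) (hB : B.IsHermitian) (f g : ℝ → ℝ) :
    (cfc f A * cfc g B).trace.re =
      ∑ j, ∑ i, overlap hA hB j i * (f (hA.eigenvalues i) * g (hB.eigenvalues j)) := by
  have h := trace_conjTranspose_mul_cfc_mul_mul_cfc hA hB f g 1 1
  rw [conjTranspose_one, Matrix.one_mul, Matrix.mul_one, Matrix.trace_mul_comm] at h
  rw [h, Complex.re_sum]
  refine Finset.sum_congr rfl fun j _ => ?_
  rw [Complex.re_sum]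
  refine Finset.sum_congr rfl fun i _ => ?_
  rw [Complex.star_def, Complex.conj_mul', overlap]
  norm_cast
  ring

theorem trace_mul_cfc_re (hA : A.IsHermitian) (hB : B.IsHermitian) (g : ℝ → ℝ) :
    (A * cfc g B).trace.re =
      ∑ j, ∑ i, overlap hA hB j i * hA.eigenvalues i * g (hB.eigenvalues j) := by
  simpa only [cfc_id' ℝ A, mul_assoc] using trace_cfc_mul_cfc_re hA hB (fun x => x) g

theorem trace_cfc_re_eq_sum_overlap (hA : A.IsHermitian) (hB : B.IsHermitian) (f : ℝ → ℝ) :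
    (cfc f A).trace.re = ∑ j, ∑ i, overlap hA hB j i * f (hA.eigenvalues i) := by
  simpa [cfc_const_one ℝ B] using trace_cfc_mul_cfc_re hA hB f (fun _ => 1)

/-- The eigenvalues of `(1 - s) L_B + s R_A`, where `L_B` and `R_A` are left multiplication by `B`
and right multiplication by `A`. -/
noncomputable def interpEigenvalue (hA : A.IsHermitian) (hB : B.IsHermitian) (s : ℝ) (j i : ι) :
    ℝ :=
  (1 - s) * hB.eigenvalues j + s * hA.eigenvalues i

/-- The form `⟪A, ((1 - s) L_B + s R_A)⁻¹ A⟫`, computed in the eigenbases of `A` and `B`. -/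
noncomputable def resolventForm (hA : A.IsHermitian) (hB : B.IsHermitian) (s : ℝ) : ℝ :=
  ∑ j, ∑ i, overlap hA hB j i * hA.eigenvalues i * hA.eigenvalues i / interpEigenvalue hA hB s j i

/-- The quadratic form in `X` whose maximum is `resolventForm`; for fixed `X` it is linear in the
pair `(A, B)`. -/
noncomputable def quadForm (s : ℝ) (A B X : Matrix ι ι ℂ) : ℝ :=
  2 * (Xᴴ * A).trace.re - (1 - s) * (Xᴴ * B * X).trace.re - s * (Xᴴ * X * A).trace.re

omit [DecidableEq ι] in
theorem quadForm_sum_smul {κ : Type*} (K : Finset κ) (s : ℝ) (w : κ → ℝ)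
    (A B : κ → Matrix ι ι ℂ) (X : Matrix ι ι ℂ) :
    quadForm s (∑ k ∈ K, w k • A k) (∑ k ∈ K, w k • B k) X =
      ∑ k ∈ K, w k * quadForm s (A k) (B k) X := by
  simp only [quadForm, Matrix.sum_mul, Matrix.trace_sum, Matrix.mul_smul,
    Matrix.smul_mul, Matrix.trace_smul, Complex.re_sum, Complex.smul_re, smul_eq_mul,
    Finset.mul_sum, ← Finset.sum_sub_distrib]
  exact Finset.sum_congr rfl fun k _ => by ring

theorem interpEigenvalue_nonneg (hA : A.PosSemidef) (hB : B.PosSemidef) {s : ℝ}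
    (hs : s ∈ Set.Icc (0 : ℝ) 1) (j i : ι) : 0 ≤ interpEigenvalue hA.1 hB.1 s j i :=
  add_nonneg (mul_nonneg (sub_nonneg.2 hs.2) (hB.eigenvalues_nonneg j))
    (mul_nonneg hs.1 (hA.eigenvalues_nonneg i))

theorem interpEigenvalue_eq_zero_iff (hA : A.PosSemidef) (hB : B.PosSemidef) {s : ℝ}
    (hs : s ∈ Set.Ioo (0 : ℝ) 1) {j i : ι} : interpEigenvalue hA.1 hB.1 s j i = 0 ↔
      hB.1.eigenvalues j = 0 ∧ hA.1.eigenvalues i = 0 := by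
  rw [interpEigenvalue, add_eq_zero_iff_of_nonneg
    (mul_nonneg (sub_pos.2 hs.2).le (hB.eigenvalues_nonneg j))
    (mul_nonneg hs.1.le (hA.eigenvalues_nonneg i)),
    mul_eq_zero_iff_left (sub_pos.2 hs.2).ne', mul_eq_zero_iff_left hs.1.ne']

theorem quadForm_eq_sum_eigencoord (hA : A.IsHermitian) (hB : B.IsHermitian) (s : ℝ)
    (X : Matrix ι ι ℂ) :
    quadForm s A B X = ∑ j, ∑ i,
      (2 * hA.eigenvalues i * (star (eigencoord hA hB X j i) * eigencoord hA hB 1 j i).re -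
        interpEigenvalue hA hB s j i * ‖eigencoord hA hB X j i‖ ^ 2) := by
  have hlin := trace_conjTranspose_mul_cfc_mul_mul_cfc hA hB (fun x => x) (fun _ => 1) X 1
  have hleft := trace_conjTranspose_mul_cfc_mul_mul_cfc hA hB (fun _ => 1) (fun x => x) X X
  have hright := trace_conjTranspose_mul_cfc_mul_mul_cfc hA hB (fun x => x) (fun _ => 1) X X
  simp only [cfc_id' ℝ A, cfc_id' ℝ B, cfc_const_one ℝ A, cfc_const_one ℝ B,
    Complex.ofReal_one, one_mul, mul_one, Complex.star_def, Complex.conj_mul'] at hlin hleft hright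
  simp only [quadForm, hlin, hleft, hright, Complex.re_sum, Finset.mul_sum,
    ← Finset.sum_sub_distrib]
  refine Finset.sum_congr rfl fun j _ => Finset.sum_congr rfl fun i _ => ?_
  simp only [interpEigenvalue, Complex.star_def, Complex.re_ofReal_mul, ← Complex.ofReal_pow,
    ← Complex.ofReal_mul, Complex.ofReal_re]
  ring

theorem quadForm_eq_resolventForm_sub (hA : A.PosSemidef) (hB : B.PosSemidef) {s : ℝ}
    (hs : s ∈ Set.Ioo (0 : ℝ) 1) (X : Matrix ι ι ℂ) :
    quadForm s A B X = resolventForm hA.1 hB.1 s -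
      ∑ j, ∑ i, interpEigenvalue hA.1 hB.1 s j i * ‖eigencoord hA.1 hB.1 X j i -
        (hA.1.eigenvalues i / interpEigenvalue hA.1 hB.1 s j i : ℝ) *
          eigencoord hA.1 hB.1 1 j i‖ ^ 2 := by
  simp only [quadForm_eq_sum_eigencoord hA.1 hB.1, resolventForm, ← Finset.sum_sub_distrib]
  exact Finset.sum_congr rfl fun j _ => Finset.sum_congr rfl fun i _ =>
    two_mul_re_conj_mul_sub_eq _ _ fun h => ((interpEigenvalue_eq_zero_iff hA hB hs).1 h).2

theorem isGreatest_resolventForm (hA : A.PosSemidef) (hB : B.PosSemidef) {s : ℝ}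
    (hs : s ∈ Set.Ioo (0 : ℝ) 1) :
    IsGreatest (Set.range (quadForm s A B)) (resolventForm hA.1 hB.1 s) := by
  constructor
  · obtain ⟨X, hX⟩ := eigencoord_surjective hA.1 hB.1 (of fun j i =>
      ((hA.1.eigenvalues i / interpEigenvalue hA.1 hB.1 s j i : ℝ) : ℂ) *
        eigencoord hA.1 hB.1 1 j i)
    refine ⟨X, ?_⟩
    rw [quadForm_eq_resolventForm_sub hA hB hs, hX]
    simp
  · rintro _ ⟨X, rfl⟩
    rw [quadForm_eq_resolventForm_sub hA hB hs]
    exact sub_le_self _ (Finset.sum_nonneg fun j _ => Finset.sum_nonneg fun i _ =>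
      mul_nonneg (interpEigenvalue_nonneg hA hB (Set.Ioo_subset_Icc_self hs) j i) (sq_nonneg _))

theorem resolventForm_sum_smul_le {κ : Type*} {K : Finset κ} {w : κ → ℝ}
    (hw : ∀ k ∈ K, 0 ≤ w k) {A B : κ → Matrix ι ι ℂ} (hA : ∀ k, (A k).PosSemidef)
    (hB : ∀ k, (B k).PosSemidef) {s : ℝ} (hs : s ∈ Set.Ioo (0 : ℝ) 1) :
    resolventForm (posSemidef_sum_smul hw fun k _ => hA k).1
        (posSemidef_sum_smul hw fun k _ => hB k).1 s ≤
      ∑ k ∈ K, w k * resolventForm (hA k).1 (hB k).1 s := by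
  obtain ⟨X, hX⟩ := (isGreatest_resolventForm (posSemidef_sum_smul hw fun k _ => hA k)
    (posSemidef_sum_smul hw fun k _ => hB k) hs).1
  rw [← hX, quadForm_sum_smul]
  exact Finset.sum_le_sum fun k hk => mul_le_mul_of_nonneg_left
    ((isGreatest_resolventForm (hA k) (hB k) hs).2 ⟨X, rfl⟩) (hw k hk)

/-- `Tr A log ((1 - s) L_B + s R_A) 1`, which interpolates between `Tr A log B` at `s = 0` and
`Tr A log A` at `s = 1`. -/
noncomputable def logInterp (hA : A.IsHermitian) (hB : B.IsHermitian) (s : ℝ) : ℝ :=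
  ∑ j, ∑ i, overlap hA hB j i * hA.eigenvalues i * Real.log (interpEigenvalue hA hB s j i)

/-- The quantum relative entropy `Tr A (log A - log B)`, where `log 0 = 0`: it is the correct
finite value when the support of `A` is contained in that of `B`, and junk otherwise. -/
noncomputable def relEntropy (A B : Matrix ι ι ℂ) : ℝ :=
  (A * (cfc Real.log A - cfc Real.log B)).trace.re

theorem logInterp_one_sub_logInterp_zero (hA : A.IsHermitian) (hB : B.IsHermitian) :
    logInterp hA hB 1 - logInterp hA hB 0 = relEntropy A B := by
  rw [relEntropy, Matrix.mul_sub, trace_sub, Complex.sub_re, trace_mul_cfc_re hA hB, mul_cfc hA,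
    trace_cfc_re_eq_sum_overlap hA hB]
  simp [logInterp, interpEigenvalue, mul_assoc]

theorem vnEntropy_eq_neg_trace (hA : A.IsHermitian) :
    vnEntropy A = -(A * cfc Real.log A).trace.re := by
  rw [mul_cfc hA, trace_cfc hA, Complex.ofReal_re, vnEntropy, dif_pos hA]

theorem vnEntropy_nonneg (hA : A.PosSemidef) (htr : A.trace = 1) : 0 ≤ vnEntropy A := by
  have hsum : ∑ i, hA.1.eigenvalues i = 1 := by
    simpa [htr] using (congrArg Complex.re hA.1.trace_eq_sum_eigenvalues).symm
  have hle : ∀ i, hA.1.eigenvalues i ≤ 1 := fun i => hsum ▸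
    Finset.single_le_sum (fun i _ => hA.eigenvalues_nonneg i) (Finset.mem_univ i)
  rw [vnEntropy, dif_pos hA.1, neg_nonneg]
  exact Finset.sum_nonpos fun i _ => mul_nonpos_of_nonneg_of_nonpos (hA.eigenvalues_nonneg i)
    (Real.log_nonpos (hA.eigenvalues_nonneg i) (hle i))

theorem vnEntropy_smul_one (c : ℝ) :
    vnEntropy (c • (1 : Matrix ι ι ℂ)) = -(Fintype.card ι * (c * Real.log c)) := by
  have hherm : (c • (1 : Matrix ι ι ℂ)).IsHermitian := isHermitian_one.smul (.all c)
  rw [vnEntropy_eq_neg_trace hherm, ← Algebra.algebraMap_eq_smul_one, cfc_algebraMap, ← map_mul,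
    Algebra.algebraMap_eq_smul_one, trace_smul, Complex.smul_re, trace_one, Complex.natCast_re,
    smul_eq_mul, mul_comm]

theorem overlap_nonneg (hA : A.IsHermitian) (hB : B.IsHermitian) (j i : ι) :
    0 ≤ overlap hA hB j i :=
  sq_nonneg _

theorem trace_mul_cfc_re_nonneg (hA : A.PosSemidef) (hB : B.IsHermitian) {g : ℝ → ℝ}
    (hg : ∀ x, 0 ≤ g x) : 0 ≤ (A * cfc g B).trace.re := by
  rw [trace_mul_cfc_re hA.1 hB]
  exact Finset.sum_nonneg fun j _ => Finset.sum_nonneg fun i _ => mul_nonneg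
    (mul_nonneg (overlap_nonneg hA.1 hB j i) (hA.eigenvalues_nonneg i)) (hg _)

open scoped MatrixOrder

theorem overlap_mul_eigenvalues_eq_zero (hA : A.PosSemidef) (hB : B.IsHermitian)
    (hAB : ∃ c : ℝ, A ≤ c • B) {j : ι} (hj : hB.eigenvalues j = 0) (i : ι) :
    overlap hA.1 hB j i * hA.1.eigenvalues i = 0 := by
  obtain ⟨c, hc⟩ := hAB
  let kernelProj : ℝ → ℝ := fun x => if x = 0 then 1 else 0
  have hnonneg : ∀ x, 0 ≤ kernelProj x := fun x => by positivity
  have hker : B * cfc kernelProj B = 0 := by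
    rw [mul_cfc hB, show (fun x => x * kernelProj x) = fun _ => 0 by ext x; simp [kernelProj],
      cfc_const_zero]
  have htrace : (A * cfc kernelProj B).trace.re = 0 := by
    refine le_antisymm ?_ (trace_mul_cfc_re_nonneg hA hB hnonneg)
    have h := trace_mul_cfc_re_nonneg (Matrix.le_iff.1 hc) hB hnonneg
    rwa [Matrix.sub_mul, Matrix.smul_mul, hker, smul_zero, zero_sub, trace_neg, Complex.neg_re,
      neg_nonneg] at h
  have hterm : ∀ j i, 0 ≤ overlap hA.1 hB j i * hA.1.eigenvalues i *
      kernelProj (hB.eigenvalues j) := fun j i => mul_nonneg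
    (mul_nonneg (overlap_nonneg hA.1 hB j i) (hA.eigenvalues_nonneg i)) (hnonneg _)
  rw [trace_mul_cfc_re hA.1 hB, Finset.sum_eq_zero_iff_of_nonneg fun j _ =>
    Finset.sum_nonneg fun i _ => hterm j i] at htrace
  have h := (Finset.sum_eq_zero_iff_of_nonneg fun i _ => hterm j i).1
    (htrace j (Finset.mem_univ j)) i (Finset.mem_univ i)
  simpa [kernelProj, hj] using h

theorem interpEigenvalue_pos (hA : A.PosSemidef) (hB : B.PosSemidef)
    (hAB : ∃ c : ℝ, A ≤ c • B) {s : ℝ} (hs : s ∈ Set.Icc (0 : ℝ) 1) {j i : ι}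
    (hji : overlap hA.1 hB.1 j i * hA.1.eigenvalues i ≠ 0) :
    0 < interpEigenvalue hA.1 hB.1 s j i := by
  have hb : 0 < hB.1.eigenvalues j := (hB.eigenvalues_nonneg j).lt_of_ne' fun hj =>
    hji (overlap_mul_eigenvalues_eq_zero hA hB.1 hAB hj i)
  have ha : 0 < hA.1.eigenvalues i :=
    (hA.eigenvalues_nonneg i).lt_of_ne' (right_ne_zero_of_mul hji)
  rw [interpEigenvalue]
  rcases hs.1.eq_or_lt with rfl | h0
  · simpa using hb
  · exact add_pos_of_nonneg_of_pos (mul_nonneg (sub_nonneg.2 hs.2) hb.le) (mul_pos h0 ha)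

theorem continuousOn_logInterp (hA : A.PosSemidef) (hB : B.PosSemidef)
    (hAB : ∃ c : ℝ, A ≤ c • B) : ContinuousOn (logInterp hA.1 hB.1) (Set.Icc 0 1) := by
  refine continuousOn_finsetSum _ fun j _ => continuousOn_finsetSum _ fun i _ => ?_
  by_cases hji : overlap hA.1 hB.1 j i * hA.1.eigenvalues i = 0
  · simp only [hji, zero_mul]
    exact continuousOn_const
  · refine continuousOn_const.mul (ContinuousOn.log ?_ fun s hs =>
      (interpEigenvalue_pos hA hB hAB hs hji).ne')
    simp only [interpEigenvalue]
    fun_prop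

theorem hasDerivAt_logInterp (hA : A.PosSemidef) (hB : B.PosSemidef) {s : ℝ}
    (hs : s ∈ Set.Ioo (0 : ℝ) 1) :
    HasDerivAt (logInterp hA.1 hB.1) ((resolventForm hA.1 hB.1 s - A.trace.re) / (1 - s)) s := by
  have htrace : A.trace.re = ∑ j, ∑ i, overlap hA.1 hB.1 j i * hA.1.eigenvalues i := by
    simpa only [cfc_id' ℝ A] using trace_cfc_re_eq_sum_overlap hA.1 hB.1 fun x => x
  rw [htrace, resolventForm]
  simp only [← Finset.sum_sub_distrib, Finset.sum_div]
  refine HasDerivAt.fun_sum fun j _ => HasDerivAt.fun_sum fun i _ => ?_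
  have hlin : HasDerivAt (fun s => interpEigenvalue hA.1 hB.1 s j i)
      (hA.1.eigenvalues i - hB.1.eigenvalues j) s :=
    ((((hasDerivAt_id s).const_sub 1).mul_const (hB.1.eigenvalues j)).add
      ((hasDerivAt_id s).mul_const (hA.1.eigenvalues i))).congr_deriv (by ring)
  by_cases hm : interpEigenvalue hA.1 hB.1 s j i = 0
  · simpa [((interpEigenvalue_eq_zero_iff hA hB hs).1 hm).2] using hasDerivAt_const s (0 : ℝ)
  · refine ((hlin.log hm).const_mul
      (overlap hA.1 hB.1 j i * hA.1.eigenvalues i)).congr_deriv ?_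
    have h1 : 1 - s ≠ 0 := (sub_pos.2 hs.2).ne'
    field_simp
    rw [interpEigenvalue]
    ring

theorem relEntropy_sum_smul_le {κ : Type*} {K : Finset κ} {w : κ → ℝ}
    (hw : ∀ k ∈ K, 0 ≤ w k) {A B : κ → Matrix ι ι ℂ} (hA : ∀ k, (A k).PosSemidef)
    (hB : ∀ k, (B k).PosSemidef) (hAB : ∀ k, ∃ c : ℝ, A k ≤ c • B k) :
    relEntropy (∑ k ∈ K, w k • A k) (∑ k ∈ K, w k • B k) ≤
      ∑ k ∈ K, w k * relEntropy (A k) (B k) := by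
  have hA' := posSemidef_sum_smul hw fun k _ => hA k
  have hB' := posSemidef_sum_smul hw fun k _ => hB k
  have hAB' : ∃ c : ℝ, ∑ k ∈ K, w k • A k ≤ c • ∑ k ∈ K, w k • B k := by
    choose c hc using hAB
    exact ⟨_, sum_smul_le_sum_abs_smul hw (fun k _ => nonneg_iff_posSemidef.2 (hB k))
      fun k _ => hc k⟩
  let gap : ℝ → ℝ := fun s =>
    ∑ k ∈ K, w k * logInterp (hA k).1 (hB k).1 s - logInterp hA'.1 hB'.1 s
  have hcont : ContinuousOn gap (Set.Icc 0 1) :=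
    (continuousOn_finsetSum _ fun k _ => continuousOn_const.mul
      (continuousOn_logInterp (hA k) (hB k) (hAB k))).sub (continuousOn_logInterp hA' hB' hAB')
  have hderiv : ∀ s ∈ Set.Ioo (0 : ℝ) 1, HasDerivAt gap
      ((∑ k ∈ K, w k * resolventForm (hA k).1 (hB k).1 s - resolventForm hA'.1 hB'.1 s) /
        (1 - s)) s := fun s hs => by
    refine ((HasDerivAt.fun_sum fun k _ => (hasDerivAt_logInterp (hA k) (hB k) hs).const_mul
      (w k)).sub (hasDerivAt_logInterp hA' hB' hs)).congr_deriv ?_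
    simp only [trace_sum, trace_smul, Complex.re_sum, Complex.smul_re, smul_eq_mul,
      ← mul_div_assoc, ← Finset.sum_div, mul_sub, Finset.sum_sub_distrib]
    ring
  have hmono : MonotoneOn gap (Set.Icc 0 1) := by
    refine monotoneOn_of_hasDerivWithinAt_nonneg (convex_Icc 0 1) hcont
      (fun s hs => (hderiv s (by rwa [interior_Icc] at hs)).hasDerivWithinAt) fun s hs => ?_
    rw [interior_Icc] at hs
    exact div_nonneg (sub_nonneg.2 (resolventForm_sum_smul_le hw hA hB hs)) (sub_pos.2 hs.2).le
  have h := hmono (Set.left_mem_Icc.2 zero_le_one) (Set.right_mem_Icc.2 zero_le_one) zero_le_one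
  simp only [← logInterp_one_sub_logInterp_zero hA'.1 hB'.1,
    ← fun k => logInterp_one_sub_logInterp_zero (hA k).1 (hB k).1, mul_sub,
    Finset.sum_sub_distrib]
  linarith

omit [Fintype ι] in
theorem exists_le_smul_one [Finite ι] (hA : A.IsHermitian) :
    ∃ c : ℝ, A ≤ c • (1 : Matrix ι ι ℂ) := by
  have := Fintype.ofFinite ι
  obtain ⟨c, hc⟩ := (finite_real_spectrum (A := A)).bddAbove
  refine ⟨c, ?_⟩
  rw [← Algebra.algebraMap_eq_smul_one]
  exact le_algebraMap_of_spectrum_le fun x hx => hc hx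

theorem vnEntropy_eq_neg_relEntropy_one (hA : A.IsHermitian) :
    vnEntropy A = -relEntropy A 1 := by
  simp [vnEntropy_eq_neg_trace hA, relEntropy]

theorem sum_mul_vnEntropy_le {κ : Type*} {K : Finset κ} {w : κ → ℝ} (hw : ∀ k ∈ K, 0 ≤ w k)
    (hw1 : ∑ k ∈ K, w k = 1) {A : κ → Matrix ι ι ℂ} (hA : ∀ k, (A k).PosSemidef) :
    ∑ k ∈ K, w k * vnEntropy (A k) ≤ vnEntropy (∑ k ∈ K, w k • A k) := by
  have h := relEntropy_sum_smul_le hw hA (B := fun _ => 1) (fun _ => .one)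
    fun k => exists_le_smul_one (hA k).1
  rw [← Finset.sum_smul, hw1, one_smul] at h
  simpa only [vnEntropy_eq_neg_relEntropy_one (posSemidef_sum_smul hw fun k _ => hA k).1,
    fun k => vnEntropy_eq_neg_relEntropy_one (hA k).1, mul_neg, Finset.sum_neg_distrib,
    neg_le_neg_iff] using h

theorem trace_unitary_conj {V : Matrix ι ι ℂ} (hV : V ∈ unitaryGroup ι ℂ) (A : Matrix ι ι ℂ) :
    (V * A * Vᴴ).trace = A.trace := by
  rw [Matrix.trace_mul_comm, ← Matrix.mul_assoc, ← star_eq_conjTranspose,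
    mem_unitaryGroup_iff'.1 hV, Matrix.one_mul]

theorem unitary_conj_mul_unitary_conj {V : Matrix ι ι ℂ} (hV : V ∈ unitaryGroup ι ℂ)
    (A B : Matrix ι ι ℂ) : V * A * Vᴴ * (V * B * Vᴴ) = V * (A * B) * Vᴴ :=
  (map_mul (Unitary.conjStarAlgAut ℝ (Matrix ι ι ℂ) ⟨V, hV⟩) A B).symm

theorem cfc_unitary_conj {V : Matrix ι ι ℂ} (hV : V ∈ unitaryGroup ι ℂ) (hB : B.IsHermitian)
    (f : ℝ → ℝ) : cfc f (V * B * Vᴴ) = V * cfc f B * Vᴴ := by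
  have hc : Continuous (Unitary.conjStarAlgAut ℝ (Matrix ι ι ℂ) ⟨V, hV⟩) := by
    change Continuous fun X : Matrix ι ι ℂ => V * X * star V
    fun_prop
  exact (StarAlgHomClass.map_cfc (S := ℝ) (p := IsSelfAdjoint) (q := IsSelfAdjoint)
    (Unitary.conjStarAlgAut ℝ (Matrix ι ι ℂ) ⟨V, hV⟩) f B (finite_real_spectrum.continuousOn f)
    hc hB (isHermitian_mul_mul_conjTranspose V hB)).symm

theorem trace_unitary_conj_mul_cfc {V : Matrix ι ι ℂ} (hV : V ∈ unitaryGroup ι ℂ)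
    (hB : B.IsHermitian) (A : Matrix ι ι ℂ) (f : ℝ → ℝ) :
    (V * A * Vᴴ * cfc f (V * B * Vᴴ)).trace = (A * cfc f B).trace := by
  rw [cfc_unitary_conj hV hB, unitary_conj_mul_unitary_conj hV, trace_unitary_conj hV]

theorem relEntropy_unitary_conj {V : Matrix ι ι ℂ} (hV : V ∈ unitaryGroup ι ℂ)
    (hA : A.IsHermitian) (hB : B.IsHermitian) :
    relEntropy (V * A * Vᴴ) (V * B * Vᴴ) = relEntropy A B := by
  simp only [relEntropy, Matrix.mul_sub, trace_sub, trace_unitary_conj_mul_cfc hV hA,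
    trace_unitary_conj_mul_cfc hV hB]

theorem vnEntropy_unitary_conj {V : Matrix ι ι ℂ} (hV : V ∈ unitaryGroup ι ℂ)
    (hA : A.IsHermitian) : vnEntropy (V * A * Vᴴ) = vnEntropy A := by
  rw [vnEntropy_eq_neg_trace hA, vnEntropy_eq_neg_trace (isHermitian_mul_mul_conjTranspose V hA),
    trace_unitary_conj_mul_cfc hV hA]

/-! ### Mixtures of unitary conjugations -/

section Twirl

variable {κ : Type*} [Fintype κ] {V : κ → Matrix ι ι ℂ}

/-- The uniform mixture of the conjugates of `A` by the members of the family `V`. -/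
noncomputable def twirl (V : κ → Matrix ι ι ℂ) (A : Matrix ι ι ℂ) : Matrix ι ι ℂ :=
  ∑ k, (Fintype.card κ : ℝ)⁻¹ • (V k * A * (V k)ᴴ)

omit [DecidableEq ι] in
theorem posSemidef_twirl (V : κ → Matrix ι ι ℂ) (hA : A.PosSemidef) : (twirl V A).PosSemidef :=
  posSemidef_sum_smul (fun _ _ => by positivity) fun k _ => hA.mul_mul_conjTranspose_same (V k)

theorem trace_twirl_mul_cfc [Nonempty κ] (hV : ∀ k, V k ∈ unitaryGroup ι ℂ) (hB : B.IsHermitian)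
    (hinv : ∀ k, V k * B * (V k)ᴴ = B) (A : Matrix ι ι ℂ) (f : ℝ → ℝ) :
    (twirl V A * cfc f B).trace = (A * cfc f B).trace := by
  have hconj : ∀ k, (V k * A * (V k)ᴴ * cfc f B).trace = (A * cfc f B).trace := fun k => by
    conv_lhs => rw [← hinv k]
    exact trace_unitary_conj_mul_cfc (hV k) hB A f
  simp [twirl, Matrix.sum_mul, trace_sum, hconj]

theorem trace_twirl [Nonempty κ] (hV : ∀ k, V k ∈ unitaryGroup ι ℂ) (A : Matrix ι ι ℂ) :
    (twirl V A).trace = A.trace := by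
  simp [twirl, trace_sum, trace_unitary_conj (hV _)]

theorem le_card_smul_twirl (hV : ∃ k, V k = 1) (hA : A.PosSemidef) :
    A ≤ (Fintype.card κ : ℝ) • twirl V A := by
  obtain ⟨k, hk⟩ := hV
  have : Nonempty κ := ⟨k⟩
  rw [twirl, ← Finset.smul_sum, smul_inv_smul₀ (by simp)]
  calc A = V k * A * (V k)ᴴ := by simp [hk]
    _ ≤ ∑ k, V k * A * (V k)ᴴ := Finset.single_le_sum (fun k _ =>
      nonneg_iff_posSemidef.2 (hA.mul_mul_conjTranspose_same (V k))) (Finset.mem_univ k)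

theorem relEntropy_twirl_le [Nonempty κ] (hV : ∀ k, V k ∈ unitaryGroup ι ℂ) (hA : A.PosSemidef)
    (hB : B.PosSemidef) (hAB : ∃ c : ℝ, A ≤ c • B) :
    relEntropy (twirl V A) (twirl V B) ≤ relEntropy A B := by
  obtain ⟨c, hc⟩ := hAB
  have hconj : ∀ k, V k * A * (V k)ᴴ ≤ c • (V k * B * (V k)ᴴ) := fun k => by
    simpa [star_eq_conjTranspose] using star_right_conjugate_le_conjugate hc (V k)
  have h := relEntropy_sum_smul_le (K := Finset.univ) (w := fun _ => (Fintype.card κ : ℝ)⁻¹)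
    (fun _ _ => by positivity) (fun k => hA.mul_mul_conjTranspose_same (V k))
    (fun k => hB.mul_mul_conjTranspose_same (V k)) fun k => ⟨c, hconj k⟩
  simpa [twirl, relEntropy_unitary_conj (hV _) hA.1 hB.1] using h

theorem relEntropy_twirl_right [Nonempty κ] (hV : ∀ k, V k ∈ unitaryGroup ι ℂ)
    (hinv : ∀ k, V k * twirl V A * (V k)ᴴ = twirl V A) (hA : A.PosSemidef) :
    relEntropy A (twirl V A) = vnEntropy (twirl V A) - vnEntropy A := by
  rw [relEntropy, Matrix.mul_sub, trace_sub, Complex.sub_re,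
    ← trace_twirl_mul_cfc hV (posSemidef_twirl V hA).1 hinv, vnEntropy_eq_neg_trace hA.1,
    vnEntropy_eq_neg_trace (posSemidef_twirl V hA).1]
  ring

theorem vnEntropy_twirl_twirl_add_le {μ : Type*} [Fintype μ] [Nonempty μ]
    {W : μ → Matrix ι ι ℂ} (hV : ∀ k, V k ∈ unitaryGroup ι ℂ) (hW : ∀ k, W k ∈ unitaryGroup ι ℂ)
    (hV1 : ∃ k, V k = 1) (hinv : ∀ k A, V k * twirl V A * (V k)ᴴ = twirl V A)
    (hcomm : twirl W (twirl V A) = twirl V (twirl W A)) (hA : A.PosSemidef) :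
    vnEntropy (twirl V (twirl W A)) + vnEntropy A ≤
      vnEntropy (twirl V A) + vnEntropy (twirl W A) := by
  have : Nonempty κ := ⟨hV1.choose⟩
  have h := relEntropy_twirl_le hW hA (posSemidef_twirl V hA) ⟨_, le_card_smul_twirl hV1 hA⟩
  rw [hcomm, relEntropy_twirl_right hV (hinv · _) hA,
    relEntropy_twirl_right hV (hinv · _) (posSemidef_twirl W hA)] at h
  linarith

end Twirl

end Spectral

/-! ### Weyl operators -/

section Weyl

variable {G : Type*} [AddCommGroup G] [Fintype G] [DecidableEq G]

/-- The Weyl operators of the finite abelian group `G` attached to the range of `π`: translation by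
`π a` times multiplication by the character `ψ ∘ π`, indexed by the pairs `(a, ψ)`. -/
def weyl (π : G →+ G) (k : G × AddChar G ℂ) : Matrix G G ℂ :=
  of fun x y => if x + π k.1 = y then k.2 (π x) else 0

omit [Fintype G] in
theorem weyl_zero_one (π : G →+ G) : weyl π (0, 1) = 1 := by
  ext x y
  simp [weyl, one_apply]

theorem weyl_conj_apply (π : G →+ G) (k : G × AddChar G ℂ) (A : Matrix G G ℂ) (x y : G) :
    (weyl π k * A * (weyl π k)ᴴ) x y =
      k.2 (π (x - y)) * A (x + π k.1) (y + π k.1) := by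
  simp only [weyl, mul_apply, of_apply, conjTranspose_apply, apply_ite star, star_zero, ite_mul,
    mul_ite, zero_mul, mul_zero, Finset.sum_ite_eq, Finset.mem_univ, if_true]
  rw [map_sub, sub_eq_add_neg, AddChar.map_add_eq_mul, AddChar.map_neg_eq_conj, Complex.star_def]
  ring

theorem weyl_mem_unitaryGroup (π : G →+ G) (k : G × AddChar G ℂ) :
    weyl π k ∈ unitaryGroup G ℂ := by
  rw [mem_unitaryGroup_iff, star_eq_conjTranspose]
  ext x y
  have h := weyl_conj_apply π k 1 x y
  rw [Matrix.mul_one] at h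
  rw [h]
  by_cases hxy : x = y <;> simp [hxy, one_apply]

theorem twirl_weyl_apply (π : G →+ G) (A : Matrix G G ℂ) (x y : G) :
    twirl (weyl π) A x y =
      if π x = π y then (Fintype.card G : ℂ)⁻¹ * ∑ a, A (x + π a) (y + π a) else 0 := by
  simp only [twirl, Matrix.sum_apply, Matrix.smul_apply, weyl_conj_apply, Complex.real_smul,
    Fintype.sum_prod_type, ← Finset.mul_sum, ← Finset.sum_mul, AddChar.sum_apply_eq_ite, map_sub,
    sub_eq_zero, Fintype.card_prod, AddChar.card_eq]
  split_ifs <;> simp [mul_assoc]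

theorem weyl_conj_twirl_weyl (π : G →+ G) (k : G × AddChar G ℂ) (A : Matrix G G ℂ) :
    weyl π k * twirl (weyl π) A * (weyl π k)ᴴ = twirl (weyl π) A := by
  ext x y
  rw [weyl_conj_apply, twirl_weyl_apply, twirl_weyl_apply]
  simp only [map_add, add_left_inj]
  by_cases hxy : π x = π y
  · simp only [hxy, if_true, map_sub, sub_self, AddChar.map_zero_eq_one, one_mul]
    rw [← Equiv.sum_comp (Equiv.addLeft k.1) fun a => A (x + π a) (y + π a)]
    simp [add_assoc]
  · simp [hxy]

end Weyl

/-! ### Depolarizing noise -/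

theorem sum_sum_piecewise {ι β M : Type*} [Fintype ι] [DecidableEq ι] [Fintype β]
    [AddCommMonoid M] (T : Finset ι) (f : (ι → β) → M) :
    ∑ z, ∑ w, f (T.piecewise w z) = Fintype.card (ι → β) • ∑ z, f z := by
  let swap : (ι → β) × (ι → β) → (ι → β) × (ι → β) := fun p =>
    (T.piecewise p.2 p.1, T.piecewise p.1 p.2)
  have hswap : Function.Involutive swap := fun p => by
    ext i <;> by_cases hi : i ∈ T <;> simp [swap, hi]
  calc ∑ z, ∑ w, f (T.piecewise w z)
      = ∑ p : (ι → β) × (ι → β), f (swap p).1 := Fintype.sum_prod_type' _ |>.symm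
    _ = ∑ p : (ι → β) × (ι → β), f p.1 := Equiv.sum_comp hswap.toPerm fun p => f p.1
    _ = Fintype.card (ι → β) • ∑ z, f z := by
      simp [Fintype.sum_prod_type, Finset.smul_sum]

theorem le_sum_powerset_of_submodular {α : Type*} [DecidableEq α] {p : ℝ} (hp0 : 0 ≤ p)
    (hp1 : p ≤ 1) {f : Finset α → ℝ} (hf : ∀ S T, f (S ∪ T) + f (S ∩ T) ≤ f S + f T)
    (A : Finset α) :
    (1 - p) * f ∅ + p * f A ≤
      ∑ S ∈ A.powerset, p ^ S.card * (1 - p) ^ (A.card - S.card) * f S := by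
  induction A using Finset.induction_on generalizing f with
  | empty => simp [← add_mul]
  | insert i A hi ih =>
    have hsubmod : f (insert i A) + f ∅ ≤ f {i} + f A := by
      simpa [Finset.singleton_inter_of_notMem hi] using hf {i} A
    have hwithout : ∑ S ∈ A.powerset, p ^ S.card * (1 - p) ^ ((insert i A).card - S.card) * f S =
        (1 - p) * ∑ S ∈ A.powerset, p ^ S.card * (1 - p) ^ (A.card - S.card) * f S := by
      rw [Finset.mul_sum]
      refine Finset.sum_congr rfl fun S hS => ?_
      rw [Finset.card_insert_of_notMem hi,
        Nat.sub_add_comm (Finset.card_le_card (Finset.mem_powerset.1 hS)), pow_succ]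
      ring
    have hwith : ∑ S ∈ A.powerset, p ^ (insert i S).card *
          (1 - p) ^ ((insert i A).card - (insert i S).card) * f (insert i S) =
        p * ∑ S ∈ A.powerset, p ^ S.card * (1 - p) ^ (A.card - S.card) * f (insert i S) := by
      rw [Finset.mul_sum]
      refine Finset.sum_congr rfl fun S hS => ?_
      rw [Finset.card_insert_of_notMem hi,
        Finset.card_insert_of_notMem fun h => hi (Finset.mem_powerset.1 hS h),
        Nat.add_sub_add_right, pow_succ]
      ring
    rw [Finset.sum_powerset_insert hi, hwithout, hwith]
    have ihwithout := ih hf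
    have ihwith := ih (f := fun S => f (insert i S)) fun S T => by
      simpa only [Finset.insert_union_distrib, Finset.insert_inter_distrib] using
        hf (insert i S) (insert i T)
    calc (1 - p) * f ∅ + p * f (insert i A)
        ≤ (1 - p) * ((1 - p) * f ∅ + p * f A) + p * ((1 - p) * f {i} + p * f (insert i A)) := by
          linarith [mul_le_mul_of_nonneg_left hsubmod (mul_nonneg hp0 (sub_nonneg.2 hp1))]
      _ ≤ _ := add_le_add (mul_le_mul_of_nonneg_left ihwithout (sub_nonneg.2 hp1))
          (mul_le_mul_of_nonneg_left ihwith hp0)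

section Depolarizing

variable {n : ℕ} {ρ : Matrix (Fin n → Fin 2) (Fin n → Fin 2) ℂ}

theorem depolSet_apply (S : Finset (Fin n)) (ρ : Matrix (Fin n → Fin 2) (Fin n → Fin 2) ℂ)
    (x y : Fin n → Fin 2) :
    depolSet S ρ x y = if ∀ i ∈ S, x i = y i then
      ((2 : ℂ) ^ n)⁻¹ * ∑ z, ρ (S.piecewise z x) (S.piecewise z y) else 0 := by
  rw [depolSet, of_apply, ← mul_assoc, ← mul_inv, ← pow_add, 
    Nat.add_sub_cancel' (by simpa using S.card_le_univ)]

theorem depolSet_empty (ρ : Matrix (Fin n → Fin 2) (Fin n → Fin 2) ℂ) : depolSet ∅ ρ = ρ := by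
  ext x y
  simp [depolSet_apply]

theorem depolSet_depolSet (S T : Finset (Fin n))
    (ρ : Matrix (Fin n → Fin 2) (Fin n → Fin 2) ℂ) :
    depolSet S (depolSet T ρ) = depolSet (S ∪ T) ρ := by
  ext x y
  have hpiecewise : ∀ x z w : Fin n → Fin 2,
      T.piecewise w (S.piecewise z x) = (S ∪ T).piecewise (T.piecewise w z) x := fun x z w => by
    ext i
    by_cases hT : i ∈ T <;> by_cases hS : i ∈ S <;> simp [hT, hS]
  simp only [depolSet_apply, hpiecewise, Finset.mem_union, or_imp, forall_and]
  by_cases hS : ∀ i ∈ S, x i = y i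
  · have hagree : ∀ z : Fin n → Fin 2,
        (∀ i ∈ T, S.piecewise z x i = S.piecewise z y i) ↔ ∀ i ∈ T, x i = y i := fun z =>
      forall₂_congr fun i _ => by by_cases hi : i ∈ S <;> simp [hi, hS]
    by_cases hT : ∀ i ∈ T, x i = y i
    · simp only [hagree, if_pos hS, if_pos hT, if_pos (And.intro hS hT), ← Finset.mul_sum,
        sum_sum_piecewise T fun z => ρ ((S ∪ T).piecewise z x) ((S ∪ T).piecewise z y)]
      simp
    · simp [hagree, hT]
  · simp [hS]

theorem depolSet_eq_twirl (S : Finset (Fin n)) :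
    depolSet S = twirl (weyl (Set.indicatorHom (Fin 2) (S : Set (Fin n)))) := by
  have happly : ∀ (x : Fin n → Fin 2) i, Set.indicatorHom (Fin 2) (S : Set (Fin n)) x i =
      if i ∈ S then x i else 0 := fun x i => by
    simp [Set.indicatorHom, Set.indicator_apply]
  ext ρ x y
  have hiff : Set.indicatorHom (Fin 2) (S : Set (Fin n)) x = Set.indicatorHom (Fin 2) S y ↔
      ∀ i ∈ S, x i = y i := by
    refine funext_iff.trans (forall_congr' fun i => ?_)
    by_cases hi : i ∈ S <;> simp [happly, hi]
  rw [twirl_weyl_apply, depolSet_apply]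
  simp only [hiff]
  by_cases hxy : ∀ i ∈ S, x i = y i
  · have htranslate : ∀ a w : Fin n → Fin 2, (∀ i ∈ S, x i = w i) →
        w + Set.indicatorHom (Fin 2) S a = S.piecewise (x + a) w := fun a w hw => by
      ext1 i
      by_cases hi : i ∈ S <;> simp [happly, hi, hw]
    simp only [if_pos hxy, htranslate _ x fun _ _ => rfl, htranslate _ y hxy]
    rw [← Equiv.sum_comp (Equiv.addLeft x) fun z => ρ (S.piecewise z x) (S.piecewise z y)]
    simp
  · simp only [if_neg hxy]

theorem posSemidef_depolSet (S : Finset (Fin n)) (hρ : ρ.PosSemidef) :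
    (depolSet S ρ).PosSemidef :=
  depolSet_eq_twirl S ▸ posSemidef_twirl _ hρ

theorem trace_depolSet (S : Finset (Fin n)) (ρ : Matrix (Fin n → Fin 2) (Fin n → Fin 2) ℂ) :
    (depolSet S ρ).trace = ρ.trace :=
  depolSet_eq_twirl S ▸ trace_twirl (weyl_mem_unitaryGroup _) ρ

theorem depolSet_univ (htr : ρ.trace = 1) : depolSet Finset.univ ρ = ((2 : ℝ) ^ n)⁻¹ • 1 := by
  have hsum : ∑ z, ρ z z = 1 := htr
  ext x y
  by_cases hxy : x = y
  · simp [depolSet_apply, hxy, hsum]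
  · simp [depolSet_apply, hxy, ← funext_iff]

theorem vnEntropy_depolSet_univ (htr : ρ.trace = 1) :
    vnEntropy (depolSet Finset.univ ρ) = n * Real.log 2 := by
  simp [depolSet_univ htr, vnEntropy_smul_one]

theorem vnEntropy_depolSet_union_add_le (S T : Finset (Fin n)) (hρ : ρ.PosSemidef) :
    vnEntropy (depolSet (S ∪ T) ρ) + vnEntropy ρ ≤
      vnEntropy (depolSet S ρ) + vnEntropy (depolSet T ρ) := by
  have hcomm : depolSet T (depolSet S ρ) = depolSet S (depolSet T ρ) := by
    rw [depolSet_depolSet, depolSet_depolSet, Finset.union_comm]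
  simp only [← depolSet_depolSet, depolSet_eq_twirl] at hcomm ⊢
  exact vnEntropy_twirl_twirl_add_le (weyl_mem_unitaryGroup _) (weyl_mem_unitaryGroup _)
    ⟨_, weyl_zero_one _⟩ (weyl_conj_twirl_weyl _) hcomm hρ

theorem vnEntropy_depolSet_submodular (hρ : ρ.PosSemidef) (S T : Finset (Fin n)) :
    vnEntropy (depolSet (S ∪ T) ρ) + vnEntropy (depolSet (S ∩ T) ρ) ≤
      vnEntropy (depolSet S ρ) + vnEntropy (depolSet T ρ) := by
  have h := vnEntropy_depolSet_union_add_le S T (posSemidef_depolSet (S ∩ T) hρ)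
  rwa [depolSet_depolSet, depolSet_depolSet, depolSet_depolSet,
    Finset.union_eq_left.2 Finset.inter_subset_union,
    Finset.union_eq_left.2 Finset.inter_subset_left,
    Finset.union_eq_left.2 Finset.inter_subset_right] at h

theorem depolAll_eq_sum_smul (p : ℝ) (ρ : Matrix (Fin n → Fin 2) (Fin n → Fin 2) ℂ) :
    depolAll p ρ = ∑ S : Finset (Fin n), (p ^ S.card * (1 - p) ^ (n - S.card)) • depolSet S ρ := by
  simp only [depolAll, ← Complex.coe_smul, Complex.ofReal_mul, Complex.ofReal_pow]

theorem sum_pow_card_mul_pow_sub_card (n : ℕ) (p : ℝ) :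
    ∑ S : Finset (Fin n), p ^ S.card * (1 - p) ^ (n - S.card) = 1 := by
  simpa using Fintype.sum_pow_mul_eq_add_pow (Fin n) p (1 - p)

theorem posSemidef_depolAll {p : ℝ} (hp0 : 0 ≤ p) (hp1 : p ≤ 1) (hρ : ρ.PosSemidef) :
    (depolAll p ρ).PosSemidef := by
  rw [depolAll_eq_sum_smul]
  exact posSemidef_sum_smul
    (fun S _ => mul_nonneg (pow_nonneg hp0 _) (pow_nonneg (sub_nonneg.2 hp1) _))
    fun S _ => posSemidef_depolSet S hρ

theorem trace_depolAll (p : ℝ) (ρ : Matrix (Fin n → Fin 2) (Fin n → Fin 2) ℂ) :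
    (depolAll p ρ).trace = ρ.trace := by
  simp only [depolAll_eq_sum_smul, trace_sum, trace_smul, trace_depolSet, ← Finset.sum_smul,
    sum_pow_card_mul_pow_sub_card, one_smul]

theorem vnEntropy_depolAll_ge {p : ℝ} (hp0 : 0 ≤ p) (hp1 : p ≤ 1) (hρ : ρ.PosSemidef)
    (htr : ρ.trace = 1) :
    (1 - p) * vnEntropy ρ + p * (n * Real.log 2) ≤ vnEntropy (depolAll p ρ) := by
  calc (1 - p) * vnEntropy ρ + p * (n * Real.log 2)
      = (1 - p) * vnEntropy (depolSet ∅ ρ) + p * vnEntropy (depolSet Finset.univ ρ) := by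
        rw [depolSet_empty, vnEntropy_depolSet_univ htr]
    _ ≤ ∑ S, p ^ S.card * (1 - p) ^ (n - S.card) * vnEntropy (depolSet S ρ) := by
        simpa using le_sum_powerset_of_submodular hp0 hp1
          (f := fun S => vnEntropy (depolSet S ρ)) (vnEntropy_depolSet_submodular hρ) Finset.univ
    _ ≤ vnEntropy (depolAll p ρ) := by
        rw [depolAll_eq_sum_smul]
        exact sum_mul_vnEntropy_le
          (fun S _ => mul_nonneg (pow_nonneg hp0 _) (pow_nonneg (sub_nonneg.2 hp1) _))
          (sum_pow_card_mul_pow_sub_card n p) fun S => posSemidef_depolSet S hρ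

variable {p : ℝ} {U : ℕ → Matrix (Fin n → Fin 2) (Fin n → Fin 2) ℂ} {L : ℕ}

theorem posSemidef_noisyCircuit (hp0 : 0 ≤ p) (hp1 : p ≤ 1) (hρ : ρ.PosSemidef)
    (U : ℕ → Matrix (Fin n → Fin 2) (Fin n → Fin 2) ℂ) (L : ℕ) :
    (noisyCircuit p U L ρ).PosSemidef := by
  induction L with
  | zero => exact hρ
  | succ L ih => exact posSemidef_depolAll hp0 hp1 (ih.mul_mul_conjTranspose_same (U L))

theorem trace_noisyCircuit (hU : ∀ k < L, U k ∈ unitaryGroup (Fin n → Fin 2) ℂ) :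
    (noisyCircuit p U L ρ).trace = ρ.trace := by
  induction L with
  | zero => rfl
  | succ L ih =>
    rw [noisyCircuit, trace_depolAll, trace_unitary_conj (hU L L.lt_succ_self),
      ih fun k hk => hU k (hk.trans L.lt_succ_self)]

theorem entropy_noisy_circuit_lower_bound_general (hp0 : 0 ≤ p) (hp1 : p ≤ 1)
    (hU : ∀ k < L, U k ∈ unitaryGroup (Fin n → Fin 2) ℂ) (hρ : ρ.PosSemidef)
    (htr : ρ.trace = 1) :
    (1 - p) ^ L * vnEntropy ρ + (1 - (1 - p) ^ L) * n * Real.log 2 ≤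
      vnEntropy (noisyCircuit p U L ρ) := by
  induction L with
  | zero => simp [noisyCircuit]
  | succ L ih =>
    have hU' : ∀ k < L, U k ∈ unitaryGroup (Fin n → Fin 2) ℂ := fun k hk =>
      hU k (hk.trans L.lt_succ_self)
    have hUL := hU L L.lt_succ_self
    have hσ := posSemidef_noisyCircuit hp0 hp1 hρ U L
    set σ := noisyCircuit p U L ρ
    calc (1 - p) ^ (L + 1) * vnEntropy ρ + (1 - (1 - p) ^ (L + 1)) * n * Real.log 2
        = (1 - p) * ((1 - p) ^ L * vnEntropy ρ + (1 - (1 - p) ^ L) * n * Real.log 2) +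
            p * (n * Real.log 2) := by ring
      _ ≤ (1 - p) * vnEntropy (U L * σ * (U L)ᴴ) + p * (n * Real.log 2) := by
          rw [vnEntropy_unitary_conj hUL hσ.1]
          exact add_le_add_left (mul_le_mul_of_nonneg_left (ih hU') (sub_nonneg.2 hp1)) _
      _ ≤ vnEntropy (noisyCircuit p U (L + 1) ρ) :=
          vnEntropy_depolAll_ge hp0 hp1 (hσ.mul_mul_conjTranspose_same (U L))
            (by rw [trace_unitary_conj hUL, trace_noisyCircuit hU', htr])

end Depolarizing

/-- for a pure initial state and any `L`-layer noisy unitary circuit with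
depolarizing parameter `p ∈ (0,1]`, the output entropy is at least `(1−(1−p)^L)·n·log 2`. -/
theorem entropy_noisy_circuit_lower_bound (n L : ℕ) (p : ℝ) (hp0 : 0 < p) (hp1 : p ≤ 1)
    (U : ℕ → Matrix (Fin n → Fin 2) (Fin n → Fin 2) ℂ)
    (hU : ∀ k < L, U k ∈ Matrix.unitaryGroup (Fin n → Fin 2) ℂ)
    (ρ₀ : Matrix (Fin n → Fin 2) (Fin n → Fin 2) ℂ)
    (hρ₀ : ρ₀.PosSemidef) (htr : ρ₀.trace = 1) (hpure : ρ₀ * ρ₀ = ρ₀) :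
    (1 - (1 - p) ^ L) * n * Real.log 2 ≤ vnEntropy (noisyCircuit p U L ρ₀) := by
  have h := entropy_noisy_circuit_lower_bound_general hp0.le hp1 hU hρ₀ htr
  exact (le_add_of_nonneg_left
    (mul_nonneg (pow_nonneg (sub_nonneg.2 hp1) L) (vnEntropy_nonneg hρ₀ htr))).trans h
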